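/- Let n ∈ ℕ, T > 0 and a > 0. Let j: ℝ^{2n} → ℝ be continuous, positively homogeneous of degree 1 (j(λx) = λ·j(x) for all λ ≥ 0 and x ∈ ℝ^{2n}), positive on ℝ^{2n}∖{0}, and continuously differentiable on ℝ^{2n}∖{0}. Let φ: ℝ → ℝ be C^1 with φ(0) = 0, φ′(0) = 0, φ′(t) > 0 for all t > 0, t ↦ φ′(t)/t strictly decreasing on (0,∞), and φ′(t)/t → 1 as t → 0⁺. Define H̃(x) = a·φ(j(x)). Then: (1) the only constant T-periodic solution of ẋ(t) = J∇H̃(x(t)) is x ≡ 0; and (2) a nonconstant T-periodic C^1 curve x: ℝ → ℝ^{2n} satisfies ẋ(t) = J∇H̃(x(t)) for all t if and only if there exist ρ > 0, τ > 0, and a τ-periodic C^1 curve y: ℝ → ℝ^{2n} with j(y(t)) = 1 and ẏ(t) = J∇j(y(t)) for all t, such that φ′(ρ)/ρ = τ/(aT) and x(t) = ρ·y(τt/T) for all t ∈ ℝ. -/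

import Mathlib

/-!
Write `H = ψ ∘ j` with `ψ = a φ`. The energy `H` is conserved, and `ψ` is strictly monotone on
`[0, ∞)`, so `j` equals a constant `ρ` along every solution, with `ρ > 0` when the solution is not
constant. On that level `∇H = ψ'(ρ) ∇j`, and `∇j` is homogeneous of degree `0`, so a homothety by
`ρ⁻¹` combined with a linear change of time carries the flow of `H` to the flow of `j` on
`j⁻¹(1)`, the two clocks differing by the factor `ψ'(ρ) / ρ`. Euler's identity `⟪∇j(z), z⟫ = j(z)`
prevents `∇H` from vanishing away from the origin.
-/

open Set Filter Topology

/-- The standard symplectic matrix `J = [[0, -I_n], [I_n, 0]]` acting on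
`ℝ^{2n}`. -/
noncomputable def symplJ (n : ℕ) (x : EuclideanSpace ℝ (Fin (2 * n))) :
    EuclideanSpace ℝ (Fin (2 * n)) :=
  WithLp.toLp 2 fun i => if h : (i : ℕ) < n then -x ⟨(i : ℕ) + n, by omega⟩
           else x ⟨(i : ℕ) - n, by have := i.isLt; omega⟩

theorem symplJ_symplJ (n : ℕ) (v : EuclideanSpace ℝ (Fin (2 * n))) :
    symplJ n (symplJ n v) = -v := by
  ext i
  by_cases hi : (i : ℕ) < n
  · simp [symplJ, hi]
  · have hin : (i : ℕ) - n < n := by omega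
    have hni : (i : ℕ) - n + n = i := by omega
    simp [symplJ, hi, hin, hni]

theorem symplJ_injective (n : ℕ) : Function.Injective (symplJ n) := fun v w h => by
  simpa only [symplJ_symplJ, neg_inj] using congrArg (symplJ n) h

theorem inner_symplJ_self (n : ℕ) (v : EuclideanSpace ℝ (Fin (2 * n))) :
    inner ℝ v (symplJ n v) = 0 := by
  rw [PiLp.inner_apply, ← Fin.sum_congr' (fun i => inner ℝ (v i) (symplJ n v i)) (two_mul n).symm,
    Fin.sum_univ_add, ← Finset.sum_add_distrib]
  refine Finset.sum_eq_zero fun i _ => ?_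
  simp only [symplJ, Fin.val_cast, Fin.val_castAdd, Fin.is_lt, ↓reduceDIte, RCLike.inner_apply,
    Real.ringHom_apply, neg_mul, Fin.natAdd_eq_addNat, Fin.val_addNat, add_lt_iff_neg_right,
    not_lt_zero, add_tsub_cancel_right]
  exact neg_add_eq_zero.2 (mul_comm _ _)

/-- The standard symplectic matrix `symplJ n` as a linear map, so that results about an arbitrary
linear operator `J` apply to it. -/
noncomputable def symplJLinearMap (n : ℕ) :
    EuclideanSpace ℝ (Fin (2 * n)) →ₗ[ℝ] EuclideanSpace ℝ (Fin (2 * n)) where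
  toFun := symplJ n
  map_add' v w := by
    ext i
    by_cases hi : (i : ℕ) < n <;> simp [symplJ, hi, add_comm]
  map_smul' c v := by
    ext i
    by_cases hi : (i : ℕ) < n <;> simp [symplJ, hi]

/-- Positive homogeneity of degree one of a real function `j`, the property of a gauge that makes
its level sets homothetic. The factor `0` is allowed, so that `j 0 = 0`. -/
def PosHomogeneous {E : Type*} [AddCommGroup E] [Module ℝ E] (j : E → ℝ) : Prop :=
  ∀ c : ℝ, 0 ≤ c → ∀ x, j (c • x) = c * j x

namespace PosHomogeneous

section Module

variable {E : Type*} [AddCommGroup E] [Module ℝ E] {j : E → ℝ}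

theorem map_zero (hj : PosHomogeneous j) : j 0 = 0 := by
  simpa using hj 0 le_rfl 0

theorem nonneg (hj : PosHomogeneous j) (hpos : ∀ z, z ≠ 0 → 0 < j z) (z : E) : 0 ≤ j z := by
  rcases eq_or_ne z 0 with rfl | hz
  · exact hj.map_zero.ge
  · exact (hpos z hz).le

theorem eq_zero_iff (hj : PosHomogeneous j) (hpos : ∀ z, z ≠ 0 → 0 < j z) {z : E} :
    j z = 0 ↔ z = 0 :=
  ⟨fun h => by_contra fun hz => (hpos z hz).ne' h, fun h => h ▸ hj.map_zero⟩

end Module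

theorem isBigO_id {E : Type*} [NormedAddCommGroup E] [NormedSpace ℝ E] {j : E → ℝ}
    (hj : PosHomogeneous j) (hc : ContinuousAt j 0) : j =O[𝓝 0] (id : E → E) := by
  obtain ⟨δ, hδ, hball⟩ := Metric.continuousAt_iff.1 hc 1 one_pos
  refine .of_bound (2 / δ) (.of_forall fun z => ?_)
  rcases eq_or_ne z 0 with rfl | hz
  · simp [hj.map_zero]
  have hz' : 0 < ‖z‖ := norm_pos_iff.2 hz
  have hw : ‖j ((δ / (2 * ‖z‖)) • z)‖ < 1 := by
    simpa [hj.map_zero] using @hball ((δ / (2 * ‖z‖)) • z) (by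
      rw [dist_zero_right, norm_smul, Real.norm_of_nonneg (by positivity)]
      field_simp
      linarith)
  rw [hj _ (by positivity), norm_mul, Real.norm_of_nonneg (by positivity)] at hw
  simp only [id]
  field_simp at hw ⊢
  linarith

section HasGradientAt

variable {E : Type*} [NormedAddCommGroup E] [InnerProductSpace ℝ E] [CompleteSpace E]
  {j : E → ℝ} {g z : E}

theorem hasGradientAt_smul (hj : PosHomogeneous j) {r : ℝ} (hr : 0 < r)
    (hg : HasGradientAt j g z) : HasGradientAt j g (r • z) := by
  rw [hasGradientAt_iff_hasFDerivAt, ← hasFDerivWithinAt_univ, ← smul_set_univ₀ hr.ne',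
    ← hasFDerivWithinAt_comp_smul_smul_iff, hasFDerivWithinAt_univ, funext (hj r hr.le)]
  exact hg.hasFDerivAt.const_mul r

theorem inner_eq_of_hasGradientAt (hj : PosHomogeneous j) (hg : HasGradientAt j g z) :
    inner ℝ g z = j z := by
  have hray : HasDerivAt (fun s : ℝ => s • z) z 1 := by
    simpa using (hasDerivAt_id (1 : ℝ)).smul_const z
  have hchain : HasDerivAt (fun s : ℝ => j (s • z)) (inner ℝ g z) 1 :=
    hg.hasFDerivAt.comp_hasDerivAt_of_eq 1 hray (one_smul ℝ z).symm
  have hlinear : HasDerivAt (fun s : ℝ => s * j z) (j z) 1 := by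
    simpa using (hasDerivAt_id (1 : ℝ)).mul_const (j z)
  refine hchain.unique (hlinear.congr_of_eventuallyEq ?_)
  filter_upwards [Ioi_mem_nhds one_pos] with s hs using hj s (le_of_lt hs) z

end HasGradientAt

end PosHomogeneous

section Hamiltonian

variable {E : Type*} [NormedAddCommGroup E] [InnerProductSpace ℝ E] [CompleteSpace E]
  {j : E → ℝ} {ψ : ℝ → ℝ} {x y : ℝ → E}

theorem hasGradientAt_comp {c : ℝ} {g z : E} (hψ : HasDerivAt ψ c (j z))
    (hg : HasGradientAt j g z) : HasGradientAt (fun w => ψ (j w)) (c • g) z := by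
  rw [hasGradientAt_iff_hasFDerivAt, map_smul]
  exact hψ.comp_hasFDerivAt z hg.hasFDerivAt

namespace PosHomogeneous

theorem hasGradientAt_comp_zero (hj : PosHomogeneous j) (hc : ContinuousAt j 0)
    (hψ : HasDerivAt ψ 0 0) : HasGradientAt (fun w => ψ (j w)) 0 0 := by
  have hψo : (fun t => ψ t - ψ 0) =o[𝓝 0] (fun t : ℝ => t) := by simpa using hψ.isLittleO
  have hlim : Tendsto j (𝓝 0) (𝓝 0) := by simpa only [hj.map_zero] using hc.tendsto
  rw [hasGradientAt_iff_isLittleO]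
  simpa [hj.map_zero, Function.comp_def] using!
    (hψo.comp_tendsto hlim).trans_isBigO (hj.isBigO_id hc)

theorem differentiable_comp (hj : PosHomogeneous j) (hc : ContinuousAt j 0)
    (hd : ∀ z, z ≠ 0 → DifferentiableAt ℝ j z) (hψ : Differentiable ℝ ψ)
    (hψ0 : deriv ψ 0 = 0) : Differentiable ℝ fun w => ψ (j w) := fun z => by
  rcases eq_or_ne z 0 with rfl | hz
  · have hψ' : HasDerivAt ψ 0 0 := by simpa only [hψ0] using (hψ 0).hasDerivAt
    exact (hj.hasGradientAt_comp_zero hc hψ').differentiableAt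
  · exact (hψ (j z)).comp z (hd z hz)

theorem eq_zero_of_gradient_comp_eq_zero (hj : PosHomogeneous j)
    (hpos : ∀ z, z ≠ 0 → 0 < j z) (hd : ∀ z, z ≠ 0 → DifferentiableAt ℝ j z)
    (hψpos : ∀ t, 0 < t → 0 < deriv ψ t) {z : E}
    (hz : gradient (fun w => ψ (j w)) z = 0) : z = 0 := by
  by_contra hne
  have hjz : 0 < j z := hpos z hne
  have hψz : deriv ψ (j z) ≠ 0 := (hψpos _ hjz).ne'
  have hgrad := hasGradientAt_comp (differentiableAt_of_deriv_ne_zero hψz).hasDerivAt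
    (hd z hne).hasGradientAt
  have hgrad_zero : gradient j z = 0 :=
    (smul_eq_zero.1 (hgrad.gradient.symm.trans hz)).resolve_left hψz
  have heuler := hj.inner_eq_of_hasGradientAt (hd z hne).hasGradientAt
  rw [hgrad_zero, inner_zero_left] at heuler
  exact hjz.ne heuler

end PosHomogeneous

/-- Solutions of the Hamiltonian system `ẋ = J∇H(x)` on a real Hilbert space. The map `J` is
arbitrary; skew-symmetry is expressed separately, as `⟪v, J v⟫ = 0` for all `v`. -/
def IsHamiltonianSolution (J : E → E) (H : E → ℝ) (x : ℝ → E) : Prop :=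
  ∀ t, HasDerivAt x (J (gradient H (x t))) t

/-- A closed characteristic `(τ, y)` on the hypersurface `j⁻¹(1)`: a `τ`-periodic `C¹` solution
of `ẏ = J∇j(y)` lying on it. The period `τ` need be neither positive nor minimal. -/
def IsClosedCharacteristic (J : E → E) (j : E → ℝ) (τ : ℝ) (y : ℝ → E) : Prop :=
  ContDiff ℝ 1 y ∧ (∀ t, y (t + τ) = y t) ∧ (∀ t, j (y t) = 1) ∧ IsHamiltonianSolution J j y

namespace IsHamiltonianSolution

theorem energy_eq {J : E → E} (hJ : ∀ v, inner ℝ v (J v) = 0) {H : E → ℝ}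
    (hH : ∀ t, DifferentiableAt ℝ H (x t)) (hx : IsHamiltonianSolution J H x) (s t : ℝ) :
    H (x s) = H (x t) := by
  have hderiv (t : ℝ) : HasDerivAt (fun t => H (x t)) 0 t := by
    rw [← hJ (gradient H (x t))]
    exact (hH t).hasGradientAt.hasFDerivAt.comp_hasDerivAt t (hx t)
  exact is_const_of_deriv_eq_zero (fun t => (hderiv t).differentiableAt)
    (fun t => (hderiv t).deriv) s t

theorem eq_zero_of_const {J : E →ₗ[ℝ] E} (hJ : Function.Injective J) (hj : PosHomogeneous j)
    (hpos : ∀ z, z ≠ 0 → 0 < j z) (hd : ∀ z, z ≠ 0 → DifferentiableAt ℝ j z)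
    (hψpos : ∀ t, 0 < t → 0 < deriv ψ t) {z : E}
    (hz : IsHamiltonianSolution J (fun w => ψ (j w)) fun _ => z) : z = 0 :=
  hj.eq_zero_of_gradient_comp_eq_zero hpos hd hψpos <|
    (map_eq_zero_iff J hJ).1 <| (hz 0).unique (hasDerivAt_const 0 z)

theorem exists_pos_forall_eq {J : E → E} (hJ : ∀ v, inner ℝ v (J v) = 0) (hj : PosHomogeneous j)
    (hc : ContinuousAt j 0) (hpos : ∀ z, z ≠ 0 → 0 < j z)
    (hd : ∀ z, z ≠ 0 → DifferentiableAt ℝ j z) (hψ : Differentiable ℝ ψ) (hψ0 : deriv ψ 0 = 0)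
    (hψpos : ∀ t, 0 < t → 0 < deriv ψ t) (hx : IsHamiltonianSolution J (fun w => ψ (j w)) x)
    (hne : ∃ s t, x s ≠ x t) : ∃ ρ, 0 < ρ ∧ ∀ t, j (x t) = ρ := by
  have hψmono : StrictMonoOn ψ (Ici 0) :=
    strictMonoOn_of_deriv_pos (convex_Ici 0) hψ.continuous.continuousOn
      (by simpa only [interior_Ici, mem_Ioi] using hψpos)
  have hconst (s t : ℝ) : j (x s) = j (x t) :=
    hψmono.injOn (hj.nonneg hpos _) (hj.nonneg hpos _)
      (hx.energy_eq hJ (fun t => hj.differentiable_comp hc hd hψ hψ0 (x t)) s t)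
  refine ⟨j (x 0), (hj.nonneg hpos _).lt_of_ne' fun h0 => ?_, fun t => hconst t 0⟩
  have hzero (t : ℝ) : x t = 0 := (hj.eq_zero_iff hpos).1 ((hconst t 0).trans h0)
  obtain ⟨s, t, hst⟩ := hne
  exact hst ((hzero s).trans (hzero t).symm)

theorem rescale {J : E →ₗ[ℝ] E} (hj : PosHomogeneous j)
    (hd : ∀ z, z ≠ 0 → DifferentiableAt ℝ j z) {ψ₁ ψ₂ : ℝ → ℝ} {r ρ c d : ℝ} (hr : r ≠ 0)
    (hρ : 0 < ρ) (hψ₁ : HasDerivAt ψ₁ d r) (hψ₂ : HasDerivAt ψ₂ (ρ * c * d) (ρ * r))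
    (hx : IsHamiltonianSolution J (fun w => ψ₁ (j w)) x) (hxr : ∀ t, j (x t) = r) :
    IsHamiltonianSolution J (fun w => ψ₂ (j w)) fun t => ρ • x (c * t) := fun t => by
  have hne : x (c * t) ≠ 0 := fun h => hr (by rw [← hxr, h, hj.map_zero])
  have hg := (hd _ hne).hasGradientAt
  have hgrad₁ := hasGradientAt_comp (by rwa [hxr]) hg (ψ := ψ₁)
  have hgrad₂ := hasGradientAt_comp (by rwa [hj ρ hρ.le, hxr]) (hj.hasGradientAt_smul hρ hg)
    (ψ := ψ₂)
  have hclock : HasDerivAt (c * ·) c t := by simpa using (hasDerivAt_id t).const_mul c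
  refine (((hx (c * t)).scomp t hclock).const_smul ρ).congr_deriv ?_
  rw [hgrad₁.gradient, hgrad₂.gradient, map_smul, map_smul, smul_smul, smul_smul]

theorem isClosedCharacteristic_rescale {J : E →ₗ[ℝ] E} (hj : PosHomogeneous j)
    (hd : ∀ z, z ≠ 0 → DifferentiableAt ℝ j z) {ρ c T : ℝ} (hρ : 0 < ρ) (hc : c ≠ 0)
    (hψ : HasDerivAt ψ (c * ρ) ρ) (hx : IsHamiltonianSolution J (fun w => ψ (j w)) x)
    (hxC : ContDiff ℝ 1 x) (hxT : ∀ t, x (t + T) = x t) (hxρ : ∀ t, j (x t) = ρ) :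
    IsClosedCharacteristic J j (c * T) fun s => ρ⁻¹ • x (c⁻¹ * s) := by
  refine ⟨(hxC.comp (contDiff_const.mul contDiff_id)).const_smul ρ⁻¹, fun s => ?_, fun s => ?_,
    rescale hj hd hρ.ne' (inv_pos.2 hρ) hψ (ψ₂ := id) ?_ hx hxρ⟩
  · simp only [mul_add, inv_mul_cancel_left₀ hc, hxT]
  · rw [hj _ (inv_nonneg.2 hρ.le), hxρ, inv_mul_cancel₀ hρ.ne']
  · have hrate : ρ⁻¹ * c⁻¹ * (c * ρ) = 1 := by field_simp
    exact hrate ▸ hasDerivAt_id _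

end IsHamiltonianSolution

theorem IsClosedCharacteristic.isHamiltonianSolution_rescale {J : E →ₗ[ℝ] E}
    (hj : PosHomogeneous j) (hd : ∀ z, z ≠ 0 → DifferentiableAt ℝ j z) {ρ c τ : ℝ} (hρ : 0 < ρ)
    (hψ : HasDerivAt ψ (c * ρ) ρ) (hy : IsClosedCharacteristic J j τ y) :
    IsHamiltonianSolution J (fun w => ψ (j w)) fun t => ρ • y (c * t) :=
  IsHamiltonianSolution.rescale hj hd one_ne_zero hρ (hasDerivAt_id 1)
    (by simpa only [mul_one, mul_comm ρ c] using hψ) hy.2.2.2 hy.2.2.1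

theorem isHamiltonianSolution_iff_exists_isClosedCharacteristic {J : E →ₗ[ℝ] E}
    (hJ : ∀ v, inner ℝ v (J v) = 0) (hj : PosHomogeneous j) (hc : ContinuousAt j 0)
    (hpos : ∀ z, z ≠ 0 → 0 < j z) (hd : ∀ z, z ≠ 0 → DifferentiableAt ℝ j z)
    (hψ : Differentiable ℝ ψ) (hψ0 : deriv ψ 0 = 0) (hψpos : ∀ t, 0 < t → 0 < deriv ψ t)
    {T : ℝ} (hT : 0 < T) (hxC : ContDiff ℝ 1 x) (hxT : ∀ t, x (t + T) = x t)
    (hne : ∃ s t, x s ≠ x t) :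
    IsHamiltonianSolution J (fun w => ψ (j w)) x ↔
      ∃ (ρ τ : ℝ) (y : ℝ → E), 0 < ρ ∧ 0 < τ ∧ IsClosedCharacteristic J j τ y ∧
        deriv ψ ρ / ρ = τ / T ∧ ∀ t, x t = ρ • y (τ * t / T) := by
  have hderiv {ρ c : ℝ} (hρ : 0 < ρ) (h : deriv ψ ρ / ρ = c) : HasDerivAt ψ (c * ρ) ρ := by
    rw [← (div_eq_iff hρ.ne').1 h]
    exact (hψ ρ).hasDerivAt
  constructor
  · intro hx
    obtain ⟨ρ, hρ, hxρ⟩ := hx.exists_pos_forall_eq hJ hj hc hpos hd hψ hψ0 hψpos hne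
    obtain ⟨c, hrate⟩ : ∃ c, deriv ψ ρ / ρ = c := ⟨_, rfl⟩
    have hc0 : 0 < c := hrate ▸ div_pos (hψpos ρ hρ) hρ
    refine ⟨ρ, c * T, _, hρ, mul_pos hc0 hT,
      hx.isClosedCharacteristic_rescale hj hd hρ hc0.ne' (hderiv hρ hrate) hxC hxT hxρ,
      by rw [hrate, mul_div_cancel_right₀ _ hT.ne'], fun t => ?_⟩
    have hclock : c⁻¹ * (c * T * t / T) = t := by field_simp
    rw [hclock, smul_inv_smul₀ hρ.ne']
  · rintro ⟨ρ, τ, y, hρ, -, hy, hrate, hxy⟩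
    have hxy' : x = fun t => ρ • y (τ / T * t) := by
      simpa only [mul_div_right_comm] using funext hxy
    exact hxy' ▸ hy.isHamiltonianSolution_rescale hj hd hρ (hderiv hρ hrate)

end Hamiltonian

theorem solutions_of_modified_hamiltonian_system_general {E : Type*} [NormedAddCommGroup E]
    [InnerProductSpace ℝ E] [CompleteSpace E] {J : E →ₗ[ℝ] E} (hJinj : Function.Injective J)
    (hJ : ∀ v, inner ℝ v (J v) = 0) {T a : ℝ} (hT : 0 < T) (ha : 0 < a) {j : E → ℝ}
    (hj : PosHomogeneous j) (hc : ContinuousAt j 0) (hpos : ∀ z, z ≠ 0 → 0 < j z)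
    (hd : ∀ z, z ≠ 0 → DifferentiableAt ℝ j z) {φ : ℝ → ℝ} (hφ : Differentiable ℝ φ)
    (hφ0 : deriv φ 0 = 0) (hφpos : ∀ t, 0 < t → 0 < deriv φ t) :
    (∀ x : ℝ → E, IsHamiltonianSolution J (fun z => a * φ (j z)) x → (∀ s t, x s = x t) →
      ∀ t, x t = 0) ∧
    (∀ x : ℝ → E, ContDiff ℝ 1 x → (∀ t, x (t + T) = x t) → (∃ s t, x s ≠ x t) →
      (IsHamiltonianSolution J (fun z => a * φ (j z)) x ↔
        ∃ (ρ τ : ℝ) (y : ℝ → E), 0 < ρ ∧ 0 < τ ∧ IsClosedCharacteristic J j τ y ∧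
          deriv φ ρ / ρ = τ / (a * T) ∧ ∀ t, x t = ρ • y (τ * t / T))) := by
  have hderiv (t : ℝ) : deriv (fun s => a * φ s) t = a * deriv φ t := deriv_const_mul_field a
  have hψpos (t : ℝ) (ht : 0 < t) : 0 < deriv (fun s => a * φ s) t :=
    hderiv t ▸ mul_pos ha (hφpos t ht)
  refine ⟨fun x hx hconst t => ?_, fun x hxC hxT hne => ?_⟩
  · rw [funext fun s => hconst s t] at hx
    exact IsHamiltonianSolution.eq_zero_of_const hJinj hj hpos hd hψpos hx
  · have hrate (ρ τ : ℝ) :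
        deriv (fun s => a * φ s) ρ / ρ = τ / T ↔ deriv φ ρ / ρ = τ / (a * T) := by
      rw [hderiv, mul_div_assoc, mul_comm a T, ← div_div, eq_div_iff ha.ne', mul_comm a]
    simpa only [hrate] using isHamiltonianSolution_iff_exists_isClosedCharacteristic hJ hj hc hpos
      hd (hφ.const_mul a) (by rw [hderiv, hφ0, mul_zero]) hψpos hT hxC hxT hne

/-- Lemma 2.4: for the Hamiltonian `H̃ = a·φ(j(x))` built from the gauge
function `j` of a star-shaped hypersurface and an auxiliary function `φ`, the
only constant `T`-periodic solution of `ẋ = J∇H̃(x)` is `0`, and the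
nonconstant `T`-periodic solutions are exactly the curves `ρ·y(τt/T)` obtained
from closed characteristics `(τ, y)` with `φ'(ρ)/ρ = τ/(aT)`. -/
theorem solutions_of_modified_hamiltonian_system (n : ℕ) (T a : ℝ)
    (hT : 0 < T) (ha : 0 < a)
    (j : EuclideanSpace ℝ (Fin (2 * n)) → ℝ)
    (hjc : Continuous j)
    (hjhom : ∀ lam : ℝ, 0 ≤ lam → ∀ x, j (lam • x) = lam * j x)
    (hjpos : ∀ x, x ≠ 0 → 0 < j x)
    (hjd : ContDiffOn ℝ 1 j {x | x ≠ 0})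
    (φ : ℝ → ℝ) (hφ : ContDiff ℝ 1 φ)
    (hφ0 : φ 0 = 0) (hφ'0 : deriv φ 0 = 0)
    (hφ'pos : ∀ t : ℝ, 0 < t → 0 < deriv φ t)
    (hmono : StrictAntiOn (fun t => deriv φ t / t) (Set.Ioi (0:ℝ)))
    (hlim : Tendsto (fun t => deriv φ t / t) (𝓝[>] (0:ℝ)) (𝓝 1)) :
    -- (1) the only constant `T`-periodic solution is `x ≡ 0`
    (∀ x : ℝ → EuclideanSpace ℝ (Fin (2 * n)),
      (∀ t, HasDerivAt x (symplJ n (gradient (fun z => a * φ (j z)) (x t))) t) →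
      (∀ t, x (t + T) = x t) →
      (∀ s t, x s = x t) →
      ∀ t, x t = 0) ∧
    -- (2) characterization of nonconstant `T`-periodic solutions
    (∀ x : ℝ → EuclideanSpace ℝ (Fin (2 * n)),
      ContDiff ℝ 1 x →
      (∀ t, x (t + T) = x t) →
      (∃ s t, x s ≠ x t) →
      ((∀ t, HasDerivAt x (symplJ n (gradient (fun z => a * φ (j z)) (x t))) t) ↔
        ∃ (ρ τ : ℝ) (y : ℝ → EuclideanSpace ℝ (Fin (2 * n))),
          0 < ρ ∧ 0 < τ ∧ ContDiff ℝ 1 y ∧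
          (∀ t, y (t + τ) = y t) ∧
          (∀ t, j (y t) = 1) ∧
          (∀ t, HasDerivAt y (symplJ n (gradient j (y t))) t) ∧
          deriv φ ρ / ρ = τ / (a * T) ∧
          (∀ t, x t = ρ • y (τ * t / T)))) := by
  obtain ⟨hzero, hiff⟩ := solutions_of_modified_hamiltonian_system_general
    (J := symplJLinearMap n) (symplJ_injective n) (inner_symplJ_self n) hT ha hjhom
    hjc.continuousAt hjpos
    (fun z hz => (hjd.contDiffAt (isOpen_ne.mem_nhds hz)).differentiableAt one_ne_zero)
    (hφ.differentiable one_ne_zero) hφ'0 hφ'pos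
  simp only [IsClosedCharacteristic, and_assoc] at hiff
  exact ⟨fun x hx _ => hzero x hx, hiff⟩
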